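/- Dummy axiom for GradCFE: if the representation map f̃ is dummy in coordinate i, then the GradCFE attribution of feature i is zero, i.e. (x − p_k)ᵢ = 0, regardless of the reference x^r and of the step scalars η₀, …, η_{k−1}. -/

import Mathlib

/-!
The objective `z ↦ ‖f̃ z - f̃ xr‖ ^ 2` inherits independence of coordinate `i` from `f̃`, so the
`i`-th coordinate of its gradient vanishes everywhere (`gradient_apply_eq_zero_of_dummy`). Every
gradient step therefore leaves coordinate `i` unchanged, and by induction `p k` and `x` agree there.
-/

/-- A function that does not depend on coordinate `i` is constant along every line in direction
`e i`, so its gradient, paired with `e i`, vanishes. If `g` is not differentiable at `z`, then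
`gradient g z` is the junk value `0`, and the claim still holds. -/
lemma gradient_apply_eq_zero_of_dummy {n : ℕ} (g : EuclideanSpace ℝ (Fin n) → ℝ) (i : Fin n)
    (hg : ∀ u v : EuclideanSpace ℝ (Fin n), (∀ l, l ≠ i → u l = v l) → g u = g v)
    (z : EuclideanSpace ℝ (Fin n)) : gradient g z i = 0 := by
  by_cases hd : DifferentiableAt ℝ g z
  · have hcoord : inner ℝ (gradient g z) (EuclideanSpace.single i (1 : ℝ)) = gradient g z i := by
      rw [EuclideanSpace.inner_single_right]
      simp
    have hconst : (fun t : ℝ => g (z + t • EuclideanSpace.single i (1 : ℝ))) = fun _ => g z := by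
      funext t
      apply hg
      intro l hl
      simp [hl]
    rw [← hcoord, inner_gradient_left, ← hd.lineDeriv_eq_fderiv, lineDeriv, hconst, deriv_const]
  · simp [gradient_eq_zero_of_not_differentiableAt hd]

/-- Dummy axiom for GradCFE: if the representation map `f̃` is dummy in
coordinate `i`, then the GradCFE attribution of feature `i` is zero. -/
theorem gradcfe_dummy_axiom (n m k : ℕ)
    (ftilde : EuclideanSpace ℝ (Fin n) → EuclideanSpace ℝ (Fin m))
    (hdiff : Differentiable ℝ ftilde) (i : Fin n)
    (hdummy : ∀ u v : EuclideanSpace ℝ (Fin n),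
      (∀ l, l ≠ i → u l = v l) → ftilde u = ftilde v)
    (xr x : EuclideanSpace ℝ (Fin n)) (η : Fin k → ℝ)
    (p : ℕ → EuclideanSpace ℝ (Fin n)) (hp0 : p 0 = x)
    (hstep : ∀ j : Fin k, p (j + 1)
      = p j - η j • gradient (fun z => ‖ftilde z - ftilde xr‖ ^ 2) (p j)) :
    (x - p k) i = 0 := by
  have hgrad := gradient_apply_eq_zero_of_dummy (fun z => ‖ftilde z - ftilde xr‖ ^ 2) i
    (fun u v huv => by simp only [hdummy u v huv])
  have hfixed : ∀ j, j ≤ k → p j i = x i := by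
    intro j
    induction j with
    | zero => intro _; rw [hp0]
    | succ j ih =>
      intro hj
      rw [hstep ⟨j, hj⟩, PiLp.sub_apply, PiLp.smul_apply, hgrad, smul_zero, sub_zero]
      exact ih (Nat.le_of_succ_le hj)
  rw [PiLp.sub_apply, hfixed k le_rfl, sub_self]
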